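/- arXiv:2404.15286 — 5 statements merged into one kernel-verified Lean document; each statement's English description precedes it below -/
import Mathlib

section
/- Let n ≥ 2, let ⟨·,·⟩ be a real inner product on M_{n,n}(ℝ), define f_n(v) = v·1_n^T − 1_n·v^T, and define the inner product ⟨x, y⟩_n := (x^T 1_n)(y^T 1_n) + ⟨f_n(x), f_n(y)⟩ on ℝ^n. If e_1, …, e_{n−1} ∈ ℝ^n are orthonormal with respect to ⟨·,·⟩_n and each e_i is ⟨·,·⟩_n-orthogonal to 1_n, then the matrices B_i = f_n(e_i), i = 1, …, n−1, form an orthonormal basis, with respect to ⟨·,·⟩, of the subspace l_n of additively consistent skew-symmetric matrices. -/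
/-!
Since `f 1 = 0`, being orthogonal to `1` for the induced form `⟨x, y⟩ₙ` just means having coordinate
sum zero, and on such vectors the induced form is the pull-back of the given form along `f`. So `f`
carries the `e i` to an orthonormal, hence linearly independent, family of `n - 1` matrices, and
by rank-nullity `n - 1` is the dimension of the range of `f`, because its kernel is the line
through `1`.
-/

open Matrix

/-- The map `f_n : ℝⁿ → M_{n,n}(ℝ)`, `f_n v = v ⬝ 1ᵀ − 1 ⬝ vᵀ`. -/
def fMap (n : ℕ) (v : Fin n → ℝ) : Matrix (Fin n) (Fin n) ℝ :=
  Matrix.vecMulVec v 1 - Matrix.vecMulVec 1 v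

/-- `l_n`: the subspace of additively consistent skew-symmetric matrices. -/
def lnSub (n : ℕ) : Submodule ℝ (Matrix (Fin n) (Fin n) ℝ) where
  carrier := {B | (∀ i j, B i j + B j i = 0) ∧ ∀ i j k, B i j + B j k + B k i = 0}
  add_mem' := by
    rintro a b ⟨ha1, ha2⟩ ⟨hb1, hb2⟩
    refine ⟨fun i j => ?_, fun i j k => ?_⟩
    · have := ha1 i j; have := hb1 i j
      simp only [Matrix.add_apply]; linarith
    · have := ha2 i j k; have := hb2 i j k
      simp only [Matrix.add_apply]; linarith
  zero_mem' := by
    refine ⟨fun i j => ?_, fun i j k => ?_⟩ <;> simp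
  smul_mem' := by
    rintro c a ⟨ha1, ha2⟩
    refine ⟨fun i j => ?_, fun i j k => ?_⟩
    · have := ha1 i j
      simp only [Matrix.smul_apply, smul_eq_mul]; linear_combination c * this
    · have := ha2 i j k
      simp only [Matrix.smul_apply, smul_eq_mul]; linear_combination c * this

section CommRing

variable {R ι : Type*} [CommRing R]

/-- The map `f : v ↦ v 1ᵀ - 1 vᵀ` over an arbitrary commutative ring and index type, as a
linear map. -/
def differenceMatrix : (ι → R) →ₗ[R] Matrix ι ι R :=
  (vecMulVecBilin R R).flip 1 - vecMulVecBilin R R 1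

@[simp]
theorem differenceMatrix_apply (v : ι → R) (i j : ι) :
    differenceMatrix v i j = v i - v j := by
  simp [differenceMatrix]

@[simp]
theorem differenceMatrix_one : differenceMatrix (1 : ι → R) = 0 := by
  ext i j
  simp

variable (R ι) in
/-- The submodule `l` of additively consistent skew-symmetric matrices over an arbitrary
commutative ring and index type. Skew-symmetry is encoded entrywise, so in characteristic two
the vanishing of the diagonal is forced by the consistency condition at `i = j = k`. -/
def consistentSubmodule : Submodule R (Matrix ι ι R) where
  carrier := {A | (∀ i j, A i j + A j i = 0) ∧ ∀ i j k, A i j + A j k + A k i = 0}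
  add_mem' := by
    rintro A B ⟨hA, hA'⟩ ⟨hB, hB'⟩
    refine ⟨fun i j => ?_, fun i j k => ?_⟩ <;> simp only [Matrix.add_apply]
    · linear_combination hA i j + hB i j
    · linear_combination hA' i j k + hB' i j k
  zero_mem' := by simp
  smul_mem' := by
    rintro c A ⟨hA, hA'⟩
    refine ⟨fun i j => ?_, fun i j k => ?_⟩ <;> simp only [Matrix.smul_apply, smul_eq_mul]
    · linear_combination c * hA i j
    · linear_combination c * hA' i j k

theorem differenceMatrix_mem_consistentSubmodule (v : ι → R) :
    differenceMatrix v ∈ consistentSubmodule R ι := by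
  constructor <;> simp

theorem differenceMatrix_col {A : Matrix ι ι R} (hA : A ∈ consistentSubmodule R ι) (k : ι) :
    differenceMatrix (A.col k) = A := by
  obtain ⟨hskew, hcons⟩ := hA
  ext i j
  rw [differenceMatrix_apply, col_apply, col_apply]
  linear_combination hskew k i - hcons i j k

theorem range_differenceMatrix :
    (differenceMatrix : (ι → R) →ₗ[R] _).range = consistentSubmodule R ι := by
  refine le_antisymm ?_ fun A hA => ?_
  · rintro _ ⟨v, rfl⟩
    exact differenceMatrix_mem_consistentSubmodule v
  · rcases isEmpty_or_nonempty ι with _ | ⟨⟨k⟩⟩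
    · exact ⟨0, Subsingleton.elim _ _⟩
    · exact ⟨A.col k, differenceMatrix_col hA k⟩

theorem ker_differenceMatrix :
    (differenceMatrix : (ι → R) →ₗ[R] _).ker = R ∙ (1 : ι → R) := by
  refine le_antisymm (fun v hv => ?_) (by simp)
  have hconst (i j : ι) : v i = v j := by
    rw [← sub_eq_zero, ← differenceMatrix_apply, LinearMap.mem_ker.1 hv, Matrix.zero_apply]
  rw [Submodule.mem_span_singleton]
  rcases isEmpty_or_nonempty ι with _ | ⟨⟨k⟩⟩
  · exact ⟨0, Subsingleton.elim _ _⟩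
  · exact ⟨v k, funext fun i => by simp [hconst i k]⟩

variable [Fintype ι]

/-- The form `⟨x, y⟩ₙ = (xᵀ 1) (yᵀ 1) + B (f x) (f y)` induced on vectors by a bilinear form `B`
on matrices. -/
def inducedForm (B : LinearMap.BilinForm R (Matrix ι ι R)) : LinearMap.BilinForm R (ι → R) :=
  LinearMap.BilinForm.linMulLin ((dotProductBilin R R).flip 1) ((dotProductBilin R R).flip 1) +
    B.comp differenceMatrix differenceMatrix

theorem inducedForm_apply (B : LinearMap.BilinForm R (Matrix ι ι R)) (x y : ι → R) :
    inducedForm B x y =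
      (x ⬝ᵥ 1) * (y ⬝ᵥ 1) + B (differenceMatrix x) (differenceMatrix y) :=
  rfl

theorem inducedForm_one_right (B : LinearMap.BilinForm R (Matrix ι ι R)) (x : ι → R) :
    inducedForm B x 1 = (x ⬝ᵥ 1) * Fintype.card ι := by
  rw [inducedForm_apply, differenceMatrix_one, map_zero, add_zero, one_dotProduct_one]

theorem inducedForm_of_dotProduct_one_eq_zero (B : LinearMap.BilinForm R (Matrix ι ι R))
    {x : ι → R} (hx : x ⬝ᵥ 1 = 0) (y : ι → R) :
    inducedForm B x y = B (differenceMatrix x) (differenceMatrix y) := by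
  rw [inducedForm_apply, hx, zero_mul, zero_add]

end CommRing

section Field

variable {K ι κ : Type*} [Field K] [Fintype ι] [Fintype κ]

theorem finrank_consistentSubmodule_add_one [Nonempty ι] :
    Module.finrank K (consistentSubmodule K ι) + 1 = Fintype.card ι := by
  have hrank := (differenceMatrix : (ι → K) →ₗ[K] _).finrank_range_add_finrank_ker
  rwa [range_differenceMatrix, ker_differenceMatrix, finrank_span_singleton one_ne_zero,
    Module.finrank_fintype_fun_eq_card] at hrank

theorem span_differenceMatrix_eq_consistentSubmodule {e : κ → ι → K}
    (hcard : Fintype.card κ + 1 = Fintype.card ι)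
    (hli : LinearIndependent K fun i => differenceMatrix (e i)) :
    Submodule.span K (Set.range fun i => differenceMatrix (e i)) = consistentSubmodule K ι := by
  have : Nonempty ι := Fintype.card_pos_iff.1 (by omega)
  apply Submodule.eq_of_le_of_finrank_eq
  · rw [Submodule.span_le, Set.range_subset_iff]
    exact fun i => differenceMatrix_mem_consistentSubmodule (e i)
  · rw [finrank_span_eq_card hli]
    have hfinrank := finrank_consistentSubmodule_add_one (K := K) (ι := ι)
    omega

theorem f_of_orthonormal_is_orthonormal_basis_of_ln_general [DecidableEq κ]
    (hcard : Fintype.card κ + 1 = Fintype.card ι) (hι : (Fintype.card ι : K) ≠ 0)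
    (B : LinearMap.BilinForm K (Matrix ι ι K)) (e : κ → ι → K)
    (h_orthonormal : ∀ i j, inducedForm B (e i) (e j) = if i = j then 1 else 0)
    (h_orth_ones : ∀ i, inducedForm B (e i) 1 = 0) :
    (∀ i, differenceMatrix (e i) ∈ consistentSubmodule K ι) ∧
    LinearIndependent K (fun i => differenceMatrix (e i)) ∧
    Submodule.span K (Set.range fun i => differenceMatrix (e i)) = consistentSubmodule K ι ∧
    ∀ i j, B (differenceMatrix (e i)) (differenceMatrix (e j)) = if i = j then 1 else 0 := by
  have hsum (i : κ) : e i ⬝ᵥ 1 = 0 :=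
    (mul_eq_zero_iff_right hι).1 (inducedForm_one_right B (e i) ▸ h_orth_ones i)
  have hB (i j : κ) :
      B (differenceMatrix (e i)) (differenceMatrix (e j)) = if i = j then 1 else 0 := by
    rw [← inducedForm_of_dotProduct_one_eq_zero B (hsum i), h_orthonormal]
  have hli : LinearIndependent K fun i => differenceMatrix (e i) :=
    LinearMap.BilinForm.linearIndependent_of_iIsOrtho (B := B)
      (fun i j hij => (hB i j).trans (if_neg hij)) (fun i => by simp [hB])
  exact ⟨fun i => differenceMatrix_mem_consistentSubmodule (e i), hli,
    span_differenceMatrix_eq_consistentSubmodule hcard hli, hB⟩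

end Field

/-- The bilinear form given by a symmetric function that is linear in its first argument. -/
def bilinFormOfSymm {R M : Type*} [CommSemiring R] [AddCommMonoid M] [Module R M] (ip : M → M → R)
    (symm : ∀ x y, ip x y = ip y x) (add_left : ∀ x x' y, ip (x + x') y = ip x y + ip x' y)
    (smul_left : ∀ (c : R) x y, ip (c • x) y = c * ip x y) : LinearMap.BilinForm R M :=
  LinearMap.mk₂ R ip add_left smul_left
    (fun x y y' => by rw [symm, add_left, symm y, symm y'])
    (fun c x y => by rw [symm, smul_left, symm y, smul_eq_mul])

/-- if `e 1, …, e (n-1)` are orthonormal for the induced inner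
product `⟨x, y⟩ₙ = (xᵀ1)(yᵀ1) + ip (f_n x) (f_n y)` and orthogonal to `1ₙ`,
then the matrices `f_n (e i)` form an `ip`-orthonormal basis of `l_n`. -/
theorem f_of_orthonormal_is_orthonormal_basis_of_ln (n : ℕ) (hn : 2 ≤ n)
    (ip : Matrix (Fin n) (Fin n) ℝ → Matrix (Fin n) (Fin n) ℝ → ℝ)
    (ip_symm : ∀ A B, ip A B = ip B A)
    (ip_add_left : ∀ A A' B, ip (A + A') B = ip A B + ip A' B)
    (ip_smul_left : ∀ (c : ℝ) A B, ip (c • A) B = c * ip A B)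
    (ip_pos : ∀ A, A ≠ 0 → 0 < ip A A)
    (e : Fin (n - 1) → Fin n → ℝ)
    (h_orthonormal : ∀ i j : Fin (n - 1),
        (e i ⬝ᵥ (1 : Fin n → ℝ)) * (e j ⬝ᵥ (1 : Fin n → ℝ)) + ip (fMap n (e i)) (fMap n (e j))
          = if i = j then 1 else 0)
    (h_orth_ones : ∀ i : Fin (n - 1),
        (e i ⬝ᵥ (1 : Fin n → ℝ)) * ((1 : Fin n → ℝ) ⬝ᵥ (1 : Fin n → ℝ))
          + ip (fMap n (e i)) (fMap n 1) = 0) :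
    (∀ i, fMap n (e i) ∈ lnSub n) ∧
    LinearIndependent ℝ (fun i => fMap n (e i)) ∧
    Submodule.span ℝ (Set.range fun i => fMap n (e i)) = lnSub n ∧
    (∀ i j : Fin (n - 1), ip (fMap n (e i)) (fMap n (e j)) = if i = j then 1 else 0) := by
  -- `fMap n` and `lnSub n` agree definitionally with `differenceMatrix` and `consistentSubmodule`.
  exact f_of_orthonormal_is_orthonormal_basis_of_ln_general (by simp; omega) (by simp; omega)
    (bilinFormOfSymm ip ip_symm ip_add_left ip_smul_left) e h_orthonormal h_orth_ones
end

section
/- Let n ≥ 2, let M be an n×n real skew-symmetric matrix, let U_n = 1_n·1_n^T be the all-ones matrix, and consider the Frobenius inner product ⟨A, B⟩ = tr(A·B^T) on M_{n,n}(ℝ). Then the orthogonal projection of M onto the subspace l_n of additively consistent skew-symmetric matrices is given by M* = (1/n)·[(M·U_n) − (M·U_n)^T], or equivalently M* = (1/n)·f_n(M·1_n). -/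
open Matrix

/-!
For the Frobenius inner product, `f_n` has adjoint `M ↦ (M - Mᵀ) 1`, and
`f_n(v) 1 = n v - ⟨1, v⟩ 1`. The vector `u = (M - Mᵀ) 1` is orthogonal to `1`, so applying the
adjoint to `f_n u` gives `2 n u`. Hence `M - (2n)⁻¹ f_n u` lies in the kernel of the adjoint, which
is the orthogonal complement of `l_n = im f_n`. When `M` is skew-symmetric, `u = 2 M 1`.
-/

section FrobeniusInnerProduct

variable {m k R : Type*} [Fintype m] [Fintype k] [CommRing R]

theorem one_dotProduct_sub_transpose_mulVec_one (M : Matrix m m R) :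
    1 ⬝ᵥ ((M - Mᵀ) *ᵥ 1) = 0 := by
  rw [sub_mulVec, dotProduct_sub, mulVec_transpose, dotProduct_mulVec,
    dotProduct_comm 1 (1 ᵥ* M), sub_self]

variable [LinearOrder R] [IsStrictOrderedRing R]

theorem trace_mul_transpose_self_nonneg (A : Matrix m k R) : 0 ≤ (A * Aᵀ).trace :=
  Finset.sum_nonneg fun _ _ => Finset.sum_nonneg fun _ _ => mul_self_nonneg _

theorem trace_mul_transpose_self_le_of_orthogonal {D E : Matrix m k R}
    (h : (D * Eᵀ).trace = 0) : (D * Dᵀ).trace ≤ ((D + E) * (D + E)ᵀ).trace := by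
  have h' : (E * Dᵀ).trace = 0 := by
    rw [← trace_transpose, transpose_mul, transpose_transpose, h]
  calc (D * Dᵀ).trace ≤ (D * Dᵀ).trace + (E * Eᵀ).trace :=
        le_add_of_nonneg_right (trace_mul_transpose_self_nonneg E)
    _ = ((D + E) * (D + E)ᵀ).trace := by
        simp only [transpose_add, Matrix.add_mul, Matrix.mul_add, trace_add, h, h', add_zero,
          zero_add]

end FrobeniusInnerProduct

section DifferenceMatrices

variable {n : ℕ}

theorem fMap_apply (v : Fin n → ℝ) (i j : Fin n) : fMap n v i j = v i - v j := by
  simp [fMap]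

theorem fMap_smul (c : ℝ) (v : Fin n → ℝ) : fMap n (c • v) = c • fMap n v := by
  rw [fMap, fMap, smul_vecMulVec, vecMulVec_smul, smul_sub]

theorem fMap_transpose (v : Fin n → ℝ) : (fMap n v)ᵀ = -fMap n v := by
  rw [fMap, transpose_sub, transpose_vecMulVec, transpose_vecMulVec, neg_sub]

theorem fMap_mulVec_one (v : Fin n → ℝ) :
    fMap n v *ᵥ 1 = (n : ℝ) • v - (1 ⬝ᵥ v) • 1 := by
  ext i
  simp [mulVec, dotProduct, fMap_apply]

theorem mul_vecMulVec_one_sub_transpose_eq_fMap (M : Matrix (Fin n) (Fin n) ℝ) :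
    M * vecMulVec 1 1 - (M * vecMulVec 1 1)ᵀ = fMap n (M *ᵥ 1) := by
  rw [mul_vecMulVec, transpose_vecMulVec, fMap]

theorem trace_mul_fMap_transpose (M : Matrix (Fin n) (Fin n) ℝ) (v : Fin n → ℝ) :
    (M * (fMap n v)ᵀ).trace = ((M - Mᵀ) *ᵥ 1) ⬝ᵥ v := by
  rw [fMap, transpose_sub, transpose_vecMulVec, transpose_vecMulVec, mul_sub, trace_sub,
    mul_vecMulVec, mul_vecMulVec, trace_vecMulVec, trace_vecMulVec, sub_mulVec, sub_dotProduct,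
    mulVec_transpose, dotProduct_comm (M *ᵥ v), dotProduct_mulVec]

theorem fMap_mem_lnSub (v : Fin n → ℝ) : fMap n v ∈ lnSub n := by
  constructor <;> intros <;> simp only [fMap_apply] <;> ring

theorem exists_fMap_eq_of_mem_lnSub [NeZero n] {A : Matrix (Fin n) (Fin n) ℝ}
    (hA : A ∈ lnSub n) : ∃ v, fMap n v = A := by
  refine ⟨fun i => A i 0, ?_⟩
  ext i j
  rw [fMap_apply]
  linarith [hA.1 i 0, hA.2 i j 0]

end DifferenceMatrices

section Projection

variable {n : ℕ}

/-- The Frobenius-orthogonal projection of an arbitrary square matrix `M` onto `l_n`, in the closed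
form `(2n)⁻¹ f_n((M - Mᵀ) 1)`. -/
noncomputable def lnProj (n : ℕ) (M : Matrix (Fin n) (Fin n) ℝ) : Matrix (Fin n) (Fin n) ℝ :=
  (2 * (n : ℝ))⁻¹ • fMap n ((M - Mᵀ) *ᵥ 1)

theorem lnProj_mem_lnSub (M : Matrix (Fin n) (Fin n) ℝ) : lnProj n M ∈ lnSub n :=
  (lnSub n).smul_mem _ (fMap_mem_lnSub _)

theorem lnProj_of_transpose_eq_neg {M : Matrix (Fin n) (Fin n) ℝ} (hM : Mᵀ = -M) :
    lnProj n M = (1 / (n : ℝ)) • fMap n (M *ᵥ 1) := by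
  have hu : (M - Mᵀ) *ᵥ 1 = (2 : ℝ) • (M *ᵥ 1) := by
    rw [hM, sub_neg_eq_add, add_mulVec, two_smul]
  rw [lnProj, hu, fMap_smul, smul_smul]
  congr 1
  ring

theorem sub_lnProj_sub_transpose_mulVec_one_eq_zero [NeZero n] (M : Matrix (Fin n) (Fin n) ℝ) :
    ((M - lnProj n M) - (M - lnProj n M)ᵀ) *ᵥ 1 = 0 := by
  set u := (M - Mᵀ) *ᵥ 1 with hu
  have hfu : fMap n u *ᵥ 1 = (n : ℝ) • u := by
    rw [fMap_mulVec_one, hu, one_dotProduct_sub_transpose_mulVec_one, zero_smul, sub_zero]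
  have hP : (lnProj n M - (lnProj n M)ᵀ) *ᵥ 1 = u := by
    have hn : (n : ℝ) ≠ 0 := NeZero.ne _
    rw [lnProj, ← hu, transpose_smul, fMap_transpose, smul_neg, sub_neg_eq_add, ← two_smul ℝ,
      smul_mulVec, smul_mulVec, hfu, smul_smul, smul_smul, mul_comm (2 : ℝ),
      mul_assoc, inv_mul_cancel₀ (mul_ne_zero two_ne_zero hn), one_smul]
  rw [transpose_sub, sub_sub_sub_comm, sub_mulVec, hP, sub_self]

theorem trace_sub_lnProj_mul_transpose_eq_zero [NeZero n] (M : Matrix (Fin n) (Fin n) ℝ)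
    {B : Matrix (Fin n) (Fin n) ℝ} (hB : B ∈ lnSub n) :
    ((M - lnProj n M) * Bᵀ).trace = 0 := by
  obtain ⟨v, rfl⟩ := exists_fMap_eq_of_mem_lnSub hB
  rw [trace_mul_fMap_transpose, sub_lnProj_sub_transpose_mulVec_one_eq_zero, zero_dotProduct]

theorem frobenius_projection_onto_ln_general [NeZero n] (M : Matrix (Fin n) (Fin n) ℝ) :
    lnProj n M ∈ lnSub n ∧
    ∀ A ∈ lnSub n,
      ((M - lnProj n M) * (M - lnProj n M)ᵀ).trace ≤ ((M - A) * (M - A)ᵀ).trace := by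
  refine ⟨lnProj_mem_lnSub M, fun A hA => ?_⟩
  have horth : ((M - lnProj n M) * (lnProj n M - A)ᵀ).trace = 0 :=
    trace_sub_lnProj_mul_transpose_eq_zero M ((lnSub n).sub_mem (lnProj_mem_lnSub M) hA)
  simpa only [sub_add_sub_cancel] using trace_mul_transpose_self_le_of_orthogonal horth

end Projection

/-- for skew-symmetric `M`, the Frobenius-orthogonal projection of
`M` onto `l_n` is `(1/n) • (M·Uₙ − (M·Uₙ)ᵀ)`, which equals `(1/n) • f_n (M·1ₙ)`. -/
theorem frobenius_projection_onto_ln (n : ℕ) (hn : 2 ≤ n)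
    (M : Matrix (Fin n) (Fin n) ℝ) (hskew : ∀ i j, M i j + M j i = 0) :
    ((1 / (n : ℝ)) • (M * Matrix.vecMulVec 1 1 - (M * Matrix.vecMulVec 1 1)ᵀ)) ∈ lnSub n ∧
    (∀ A ∈ lnSub n,
        ((M - (1 / (n : ℝ)) • (M * Matrix.vecMulVec 1 1 - (M * Matrix.vecMulVec 1 1)ᵀ)) *
            (M - (1 / (n : ℝ)) • (M * Matrix.vecMulVec 1 1 - (M * Matrix.vecMulVec 1 1)ᵀ))ᵀ).trace
          ≤ ((M - A) * (M - A)ᵀ).trace) ∧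
    (1 / (n : ℝ)) • (M * Matrix.vecMulVec 1 1 - (M * Matrix.vecMulVec 1 1)ᵀ)
      = (1 / (n : ℝ)) • fMap n (M *ᵥ 1) := by
  have : NeZero n := ⟨by omega⟩
  have hM : Mᵀ = -M := by
    ext i j
    exact eq_neg_of_add_eq_zero_right (hskew i j)
  rw [mul_vecMulVec_one_sub_transpose_eq_fMap, ← lnProj_of_transpose_eq_neg hM]
  exact and_assoc.mp ⟨frobenius_projection_onto_ln_general M, rfl⟩
end

section
/- Let n ≥ 2, let W be a symmetric positive definite n×n real matrix, define f_n(v) = v·1_n^T − 1_n·v^T and ⟨A, B⟩_W = tr(A·W·B^T). If v, w ∈ ℝ^n satisfy v^T 1_n = 0 and w^T 1_n = 0, then ⟨f_n(v), f_n(w)⟩_W = v^T·[(1_n^T W 1_n)·I_n + n·W]·w. -/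
open Matrix

lemma trace_vecMulVec_mul_mul_vecMulVec {m n p R : Type*} [Fintype m] [Fintype n] [Fintype p]
    [CommSemiring R] (a d : m → R) (b : n → R) (c : p → R) (W : Matrix n p R) :
    (vecMulVec a b * W * vecMulVec c d).trace = (b ⬝ᵥ W *ᵥ c) * (a ⬝ᵥ d) := by
  rw [Matrix.mul_assoc, mul_vecMulVec, vecMulVec_mul_vecMulVec, trace_vecMulVec,
    dotProduct_smul, smul_eq_mul]

section WedgeMatrix

variable {ι R : Type*} [CommRing R]

/-- The bivector `a ∧ b`, encoded as the skew-symmetric matrix `a bᵀ − b aᵀ` without the factor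
`1/2` of the antisymmetrisation. It generalises `f_n` from the second factor `1` to any vector. -/
def wedgeMatrix (a b : ι → R) : Matrix ι ι R :=
  vecMulVec a b - vecMulVec b a

lemma transpose_wedgeMatrix (a b : ι → R) : (wedgeMatrix a b)ᵀ = wedgeMatrix b a := by
  simp only [wedgeMatrix, transpose_sub, transpose_vecMulVec]

variable [Fintype ι]

lemma trace_wedgeMatrix_mul_mul_transpose_wedgeMatrix (W : Matrix ι ι R)
    (v a w b : ι → R) :
    (wedgeMatrix v a * W * (wedgeMatrix w b)ᵀ).trace =
      (a ⬝ᵥ W *ᵥ b) * (v ⬝ᵥ w) - (a ⬝ᵥ W *ᵥ w) * (v ⬝ᵥ b) -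
        (v ⬝ᵥ W *ᵥ b) * (a ⬝ᵥ w) + (v ⬝ᵥ W *ᵥ w) * (a ⬝ᵥ b) := by
  rw [transpose_wedgeMatrix]
  simp only [wedgeMatrix, Matrix.sub_mul, Matrix.mul_sub, trace_sub,
    trace_vecMulVec_mul_mul_vecMulVec]
  ring

theorem inner_W_f_f_of_orth_ones_general [DecidableEq ι] (W : Matrix ι ι R)
    {v a w b : ι → R} (hvb : v ⬝ᵥ b = 0) (haw : a ⬝ᵥ w = 0) :
    (wedgeMatrix v a * W * (wedgeMatrix w b)ᵀ).trace =
      v ⬝ᵥ (((a ⬝ᵥ W *ᵥ b) • (1 : Matrix ι ι R) + (a ⬝ᵥ b) • W) *ᵥ w) := by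
  calc (wedgeMatrix v a * W * (wedgeMatrix w b)ᵀ).trace
    _ = (a ⬝ᵥ W *ᵥ b) * (v ⬝ᵥ w) + (a ⬝ᵥ b) * (v ⬝ᵥ W *ᵥ w) := by
      rw [trace_wedgeMatrix_mul_mul_transpose_wedgeMatrix, hvb, haw]
      ring
    _ = v ⬝ᵥ (((a ⬝ᵥ W *ᵥ b) • (1 : Matrix ι ι R) + (a ⬝ᵥ b) • W) *ᵥ w) := by
      simp only [add_mulVec, smul_mulVec, one_mulVec, dotProduct_add, dotProduct_smul, smul_eq_mul]

end WedgeMatrix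

lemma fMap_eq_wedgeMatrix (n : ℕ) (v : Fin n → ℝ) : fMap n v = wedgeMatrix v 1 := rfl

/-- if `vᵀ1 = 0` and `wᵀ1 = 0`, then
`⟨f_n v, f_n w⟩_W = vᵀ·[(1ᵀW1)·Iₙ + n·W]·w`. -/
theorem inner_W_f_f_of_orth_ones (n : ℕ) (hn : 2 ≤ n)
    (W : Matrix (Fin n) (Fin n) ℝ) (hWsymm : W.IsSymm) (hW : W.PosDef)
    (v w : Fin n → ℝ) (hv : v ⬝ᵥ (1 : Fin n → ℝ) = 0) (hw : w ⬝ᵥ (1 : Fin n → ℝ) = 0) :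
    (fMap n v * W * (fMap n w)ᵀ).trace
      = v ⬝ᵥ ((((1 : Fin n → ℝ) ⬝ᵥ (W *ᵥ (1 : Fin n → ℝ))) • (1 : Matrix (Fin n) (Fin n) ℝ)
          + (n : ℝ) • W) *ᵥ w) := by
  simpa only [fMap_eq_wedgeMatrix, one_dotProduct_one, Fintype.card_fin] using
    inner_W_f_f_of_orth_ones_general W hv ((dotProduct_comm 1 w).trans hw)
end

section
/- Let n ≥ 2, let W be a symmetric positive definite n×n real matrix, define f_n(v) = v·1_n^T − 1_n·v^T, ⟨A, B⟩_W = tr(A·W·B^T), and M = (1_n^T W 1_n)·I_n + n·W. Let y_1, …, y_{n−1} ∈ ℝ^n be nonzero vectors each satisfying y_i^T 1_n = 0, and suppose y_i^T M y_j = 0 for all i ≠ j. Then the matrices f_n(y_1), …, f_n(y_{n−1}) form a basis of the subspace l_n of additively consistent skew-symmetric matrices, which is pairwise orthogonal with respect to ⟨·,·⟩_W. -/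
open Matrix

/-!
On the hyperplane `1ₙ^⊥` the pullback of `⟨·, ·⟩_W` along `f_n` is the bilinear form with matrix
`M = (1ᵀW1) • Iₙ + n • W`: in `tr (f_n(u) W f_n(v)ᵀ)` both cross terms carry a factor `uᵀ1` or
`1ᵀv`. Hence `M`-orthogonal vectors of the hyperplane have `W`-orthogonal images, and if no `yᵢ` is
`M`-isotropic these images are linearly independent. They are as many as
`dim l_n = dim (im f_n) = n - dim (span 1ₙ)`.
-/

section TraceForm

variable {m n R : Type*} [Fintype m] [Fintype n] [CommSemiring R]

/-- The bilinear form `⟨A, B⟩_W = tr (A W Bᵀ)`, for an arbitrary square matrix `W`. -/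
def traceForm (W : Matrix n n R) : LinearMap.BilinForm R (Matrix m n R) :=
  LinearMap.mk₂ R (fun A B => (A * W * Bᵀ).trace)
    (fun A A' B => by simp only [Matrix.add_mul, trace_add])
    (fun c A B => by simp only [Matrix.smul_mul, trace_smul])
    (fun A B B' => by simp only [transpose_add, Matrix.mul_add, trace_add])
    (fun c A B => by simp only [transpose_smul, Matrix.mul_smul, trace_smul])

theorem traceForm_apply (W : Matrix n n R) (A B : Matrix m n R) :
    traceForm W A B = (A * W * Bᵀ).trace :=
  rfl

theorem traceForm_vecMulVec (W : Matrix n n R) (a c : m → R) (b d : n → R) :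
    traceForm W (vecMulVec a b) (vecMulVec c d) = (a ⬝ᵥ c) * (b ⬝ᵥ W *ᵥ d) := by
  rw [traceForm_apply, transpose_vecMulVec, vecMulVec_mul, vecMulVec_mul_vecMulVec,
    trace_vecMulVec, dotProduct_smul, smul_eq_mul, ← dotProduct_mulVec, mul_comm]

end TraceForm

section AdditivelyConsistent

variable {n : ℕ}

theorem eq_fMap_of_mem_lnSub {B : Matrix (Fin n) (Fin n) ℝ} (hB : B ∈ lnSub n) (k : Fin n) :
    B = fMap n (fun i => B i k) := by
  ext i j
  rw [fMap_apply]
  linarith [hB.1 k i, hB.2 i j k]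

variable (n) in
/-- `f_n` as a linear map. -/
def fLinearMap : (Fin n → ℝ) →ₗ[ℝ] Matrix (Fin n) (Fin n) ℝ where
  toFun := fMap n
  map_add' u v := by
    ext i j
    simp only [fMap_apply, Pi.add_apply, Matrix.add_apply]
    ring
  map_smul' c v := by
    ext i j
    simp only [fMap_apply, Pi.smul_apply, Matrix.smul_apply, smul_eq_mul, RingHom.id_apply]
    ring

theorem fLinearMap_apply (v : Fin n → ℝ) : fLinearMap n v = fMap n v :=
  rfl

variable [NeZero n]

theorem range_fLinearMap : LinearMap.range (fLinearMap n) = lnSub n := by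
  apply le_antisymm
  · rintro _ ⟨v, rfl⟩
    exact fMap_mem_lnSub v
  · intro B hB
    exact ⟨_, (eq_fMap_of_mem_lnSub hB 0).symm⟩

theorem ker_fLinearMap : LinearMap.ker (fLinearMap n) = Submodule.span ℝ {1} := by
  ext v
  rw [LinearMap.mem_ker, fLinearMap_apply, Submodule.mem_span_singleton]
  constructor
  · intro hv
    refine ⟨v 0, funext fun i => ?_⟩
    have hi : v i - v 0 = 0 := by rw [← fMap_apply, hv, Matrix.zero_apply]
    rw [Pi.smul_apply, Pi.one_apply, smul_eq_mul, mul_one, sub_eq_zero.mp hi]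
  · rintro ⟨c, rfl⟩
    ext i j
    simp only [fMap_apply, Pi.smul_apply, Pi.one_apply, sub_self, Matrix.zero_apply]

variable (n) in
theorem finrank_lnSub_add_one : Module.finrank ℝ (lnSub n) + 1 = n := by
  have rank_nullity := (fLinearMap n).finrank_range_add_finrank_ker
  rwa [range_fLinearMap, ker_fLinearMap, finrank_span_singleton one_ne_zero,
    Module.finrank_fin_fun] at rank_nullity

end AdditivelyConsistent

section Pullback

variable {n : ℕ}

/-- The matrix `M = (1ᵀW1) • Iₙ + n • W`, which represents the pullback of `⟨·, ·⟩_W` along `f_n`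
on the vectors orthogonal to `1ₙ`. -/
def pullbackMatrix (W : Matrix (Fin n) (Fin n) ℝ) : Matrix (Fin n) (Fin n) ℝ :=
  ((1 : Fin n → ℝ) ⬝ᵥ (W *ᵥ (1 : Fin n → ℝ))) • (1 : Matrix (Fin n) (Fin n) ℝ) + (n : ℝ) • W

theorem posDef_pullbackMatrix [NeZero n] {W : Matrix (Fin n) (Fin n) ℝ} (hW : W.PosDef) :
    (pullbackMatrix W).PosDef := by
  have hn : (0 : ℝ) < n := Nat.cast_pos.mpr (NeZero.pos n)
  have entrySum_nonneg : 0 ≤ (1 : Fin n → ℝ) ⬝ᵥ (W *ᵥ 1) := by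
    simpa only [star_one] using hW.posSemidef.dotProduct_mulVec_nonneg 1
  exact PosDef.posSemidef_add (PosSemidef.one.smul entrySum_nonneg) (hW.smul hn)

theorem traceForm_fMap_fMap (W : Matrix (Fin n) (Fin n) ℝ) {u v : Fin n → ℝ}
    (hu : u ⬝ᵥ (1 : Fin n → ℝ) = 0) (hv : v ⬝ᵥ (1 : Fin n → ℝ) = 0) :
    traceForm W (fMap n u) (fMap n v) = u ⬝ᵥ pullbackMatrix W *ᵥ v := by
  have hv' : (1 : Fin n → ℝ) ⬝ᵥ v = 0 := by rwa [dotProduct_comm]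
  have one_dot_one : (1 : Fin n → ℝ) ⬝ᵥ 1 = n := by
    rw [one_dotProduct_one, Fintype.card_fin]
  calc traceForm W (fMap n u) (fMap n v)
      = (u ⬝ᵥ v) * (1 ⬝ᵥ W *ᵥ 1) - (u ⬝ᵥ 1) * (1 ⬝ᵥ W *ᵥ v)
          - ((1 ⬝ᵥ v) * (u ⬝ᵥ W *ᵥ 1) - (1 ⬝ᵥ 1) * (u ⬝ᵥ W *ᵥ v)) := by
        simp only [fMap, map_sub, LinearMap.sub_apply, traceForm_vecMulVec]
        ring
    _ = (1 ⬝ᵥ W *ᵥ 1) * (u ⬝ᵥ v) + n * (u ⬝ᵥ W *ᵥ v) := by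
        rw [hu, hv', one_dot_one]
        ring
    _ = u ⬝ᵥ pullbackMatrix W *ᵥ v := by
        simp only [pullbackMatrix, add_mulVec, smul_mulVec, one_mulVec, dotProduct_add,
          dotProduct_smul, smul_eq_mul]

end Pullback

theorem W_orthogonal_basis_of_ln_general {n : ℕ} {ι : Type*} [Fintype ι]
    (hι : Fintype.card ι + 1 = n) (W : Matrix (Fin n) (Fin n) ℝ) (y : ι → Fin n → ℝ)
    (hy_orth_ones : ∀ i, y i ⬝ᵥ (1 : Fin n → ℝ) = 0)
    (hy_nonisotropic : ∀ i, y i ⬝ᵥ pullbackMatrix W *ᵥ y i ≠ 0)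
    (hyM : ∀ i j, i ≠ j → y i ⬝ᵥ pullbackMatrix W *ᵥ y j = 0) :
    (∀ i, fMap n (y i) ∈ lnSub n) ∧
    LinearIndependent ℝ (fun i => fMap n (y i)) ∧
    Submodule.span ℝ (Set.range fun i => fMap n (y i)) = lnSub n ∧
    (∀ i j, i ≠ j → (fMap n (y i) * W * (fMap n (y j))ᵀ).trace = 0) := by
  have : NeZero n := ⟨by omega⟩
  have form_eq (i j : ι) : traceForm W (fMap n (y i)) (fMap n (y j)) =
      y i ⬝ᵥ pullbackMatrix W *ᵥ y j :=
    traceForm_fMap_fMap W (hy_orth_ones i) (hy_orth_ones j)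
  have orthogonal : (traceForm W).IsOrthoᵢ fun i => fMap n (y i) :=
    fun i j hij => (form_eq i j).trans (hyM i j hij)
  have independent : LinearIndependent ℝ fun i => fMap n (y i) :=
    LinearMap.linearIndependent_of_isOrthoᵢ orthogonal
      fun i => (form_eq i i).trans_ne (hy_nonisotropic i)
  have mem (i : ι) : fMap n (y i) ∈ lnSub n := fMap_mem_lnSub (y i)
  refine ⟨mem, independent, ?_, fun i j hij => orthogonal hij⟩
  apply Submodule.eq_of_le_of_finrank_eq
  · exact Submodule.span_le.mpr (Set.range_subset_iff.mpr mem)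
  · have dim_lnSub := finrank_lnSub_add_one n
    rw [finrank_span_eq_card independent]
    omega

/-- if `y 1, …, y (n-1)` are nonzero, orthogonal to `1ₙ`, and
`yᵢᵀ M yⱼ = 0` for `i ≠ j` where `M = (1ᵀW1)·Iₙ + n·W`, then
`f_n (y 1), …, f_n (y (n-1))` is a `W`-orthogonal basis of `l_n`. -/
theorem W_orthogonal_basis_of_ln (n : ℕ) (hn : 2 ≤ n)
    (W : Matrix (Fin n) (Fin n) ℝ) (hWsymm : W.IsSymm) (hW : W.PosDef)
    (y : Fin (n - 1) → Fin n → ℝ)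
    (hy_ne : ∀ i, y i ≠ 0)
    (hy_orth_ones : ∀ i, y i ⬝ᵥ (1 : Fin n → ℝ) = 0)
    (hyM : ∀ i j, i ≠ j →
        y i ⬝ᵥ ((((1 : Fin n → ℝ) ⬝ᵥ (W *ᵥ (1 : Fin n → ℝ))) • (1 : Matrix (Fin n) (Fin n) ℝ)
            + (n : ℝ) • W) *ᵥ y j) = 0) :
    (∀ i, fMap n (y i) ∈ lnSub n) ∧
    LinearIndependent ℝ (fun i => fMap n (y i)) ∧
    Submodule.span ℝ (Set.range fun i => fMap n (y i)) = lnSub n ∧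
    (∀ i j, i ≠ j → (fMap n (y i) * W * (fMap n (y j))ᵀ).trace = 0) := by
  have : NeZero n := ⟨by omega⟩
  have hM : (pullbackMatrix W).PosDef := posDef_pullbackMatrix hW
  exact W_orthogonal_basis_of_ln_general (by rw [Fintype.card_fin]; omega) W y hy_orth_ones
    (fun i => (hM.dotProduct_mulVec_pos (hy_ne i)).ne') hyM
end

section
/- Let n ≥ 2 and let B be an n×n real skew-symmetric matrix. Then B satisfies ⟨B, f_n(v)⟩ = tr(B·f_n(v)^T) = 0 for every v ∈ ℝ^n (i.e., B lies in the Frobenius-orthogonal complement h_n of l_n within the space of skew-symmetric matrices) if and only if B·1_n = 0. -/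
open Matrix

theorem trace_mul_transpose_vecMulVec {m n R : Type*} [Fintype m] [Fintype n]
    [NonUnitalCommSemiring R] (A : Matrix m n R) (v : m → R) (w : n → R) :
    (A * (vecMulVec v w)ᵀ).trace = A *ᵥ w ⬝ᵥ v := by
  rw [transpose_vecMulVec, mul_vecMulVec, trace_vecMulVec]

theorem mulVec_dotProduct_eq_neg_of_transpose_eq_neg {n R : Type*} [Fintype n]
    [NonUnitalCommRing R] {B : Matrix n n R} (hB : Bᵀ = -B) (v w : n → R) :
    B *ᵥ v ⬝ᵥ w = -(B *ᵥ w ⬝ᵥ v) :=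
  calc
    B *ᵥ v ⬝ᵥ w = v ⬝ᵥ Bᵀ *ᵥ w := by rw [dotProduct_transpose_mulVec, dotProduct_comm]
    _ = -(B *ᵥ w ⬝ᵥ v) := by rw [hB, neg_mulVec, dotProduct_neg, dotProduct_comm]

section CommRing

variable {n R : Type*} [Fintype n] [CommRing R] {B : Matrix n n R}

theorem trace_mul_transpose_vecMulVec_sub_vecMulVec (hB : Bᵀ = -B) (v w : n → R) :
    (B * (vecMulVec v w - vecMulVec w v)ᵀ).trace = 2 * (B *ᵥ w ⬝ᵥ v) :=
  calc
    (B * (vecMulVec v w - vecMulVec w v)ᵀ).trace = B *ᵥ w ⬝ᵥ v - B *ᵥ v ⬝ᵥ w := by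
      simp only [transpose_sub, Matrix.mul_sub, trace_sub, trace_mul_transpose_vecMulVec]
    _ = 2 * (B *ᵥ w ⬝ᵥ v) := by
      rw [mulVec_dotProduct_eq_neg_of_transpose_eq_neg hB v w, sub_neg_eq_add, two_mul]

theorem mem_hn_iff_mulVec_ones_eq_zero_general (h2 : IsLeftRegular (2 : R)) (hB : Bᵀ = -B)
    (w : n → R) :
    (∀ v : n → R, (B * (vecMulVec v w - vecMulVec w v)ᵀ).trace = 0) ↔ B *ᵥ w = 0 := by
  simp only [trace_mul_transpose_vecMulVec_sub_vecMulVec hB, h2.mul_left_eq_zero_iff,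
    dotProduct_eq_zero_iff]

end CommRing

/-- a skew-symmetric `B` is Frobenius-orthogonal to every element
of `l_n = range f_n` (i.e. `B ∈ h_n`) iff `B · 1ₙ = 0`. -/
theorem mem_hn_iff_mulVec_ones_eq_zero (n : ℕ) (hn : 2 ≤ n)
    (B : Matrix (Fin n) (Fin n) ℝ) (hskew : ∀ i j, B i j + B j i = 0) :
    (∀ v : Fin n → ℝ, (B * (fMap n v)ᵀ).trace = 0) ↔ B *ᵥ (1 : Fin n → ℝ) = 0 :=
  have hB : Bᵀ = -B := Matrix.ext fun i j => eq_neg_of_add_eq_zero_right (hskew i j)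
  mem_hn_iff_mulVec_ones_eq_zero_general (IsRegular.of_ne_zero two_ne_zero).left hB 1
end
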